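/- arXiv:1905.06291 — 4 statements merged into one kernel-verified Lean document; each statement's English description precedes it below -/
import Mathlib

section
/- Let f : ℝⁿ × ℝᵖ → ℝⁿ be continuously differentiable with differentiable ℓ-Lipschitz steady-state map h, and let W be a differentiable Lyapunov function with constants α, β, γ, ζ > 0 (α‖x−h(u)‖² ≤ W(x,u) ≤ β‖x−h(u)‖², ⟨∇ₓW(x,u), f(x,u)⟩ ≤ −γ‖x−h(u)‖², ‖∇ᵤW(x,u)‖ ≤ ζ‖x−h(u)‖). Let Φ : ℝⁿ × ℝᵖ → ℝ be continuously differentiable such that u ↦ Φ(h(u),u) has compact sublevel sets and the L-bound ‖H(u)ᵀ(∇Φ(x',u) − ∇Φ(x,u))‖ ≤ L‖x'−x‖ holds. Let Q, D be locally Lipschitz maps of symmetric positive definite linear maps on ℝᵖ, and suppose there exist κ, λ > 0 with ‖Q(u)‖ ≤ κ for all u, ⟨D(u)z, z⟩ ≥ λ‖z‖² for all u, z, and κ²/λ < γ/(ζL). Then every complete solution (x,u,z) of ẋ = f(x,u), u̇ = Q(u)z, ż = −D(u)z − Q(u)H(u)ᵀ∇Φ(x,u) converges to the set {(x,u,z)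 : z = 0, x = h(u), H(u)ᵀ∇Φ(x,u) = 0}. -/
open Filter Metric Real
open scoped RealInnerProductSpace Topology NNReal

lemma aux_inj {E : Type*} [NormedAddCommGroup E] [InnerProductSpace ℝ E] [ProperSpace E]
    (w : E → ℝ) (f : E → E) (A : E →L[ℝ] E) (a : E) (β γ : ℝ) (hβ : 0 < β) (hγ : 0 < γ)
    (hw : Differentiable ℝ w) (hw0 : ∀ y, 0 ≤ w y) (hwub : ∀ y, w y ≤ β * ‖y - a‖ ^ 2)
    (hdec : ∀ y, fderiv ℝ w y (f y) ≤ -γ * ‖y - a‖ ^ 2)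
    (hf : HasFDerivAt f A a) (hfa : f a = 0) (v : E) (hv : ‖v‖ = 1) (hAv : A v = 0) : False := by
  obtain ⟨c, hc, hcA⟩ : ∃ c : ℝ, 0 < c ∧ 16 * c * (‖A‖ + 1) = γ := by
    have : 0 < ‖A‖ + 1 := by positivity
    exact ⟨γ / (16 * (‖A‖ + 1)), by positivity, by field_simp⟩
  obtain ⟨ε, hε, hεc⟩ : ∃ ε : ℝ, 0 < ε ∧ β + c * (Real.log 4 + Real.log ε) < 0 := by
    refine ⟨Real.exp (-(β / c) - 1 - Real.log 4), Real.exp_pos _, ?_⟩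
    rw [Real.log_exp]
    have : c * (Real.log 4 + (-(β / c) - 1 - Real.log 4)) = -β - c := by field_simp; ring
    linarith
  have hlo := hf.isLittleO
  have hη : 0 < Real.sqrt ε := Real.sqrt_pos.2 hε
  have hev := (Asymptotics.isLittleO_iff.1 hlo) hη
  obtain ⟨δ, hδ, hball⟩ := Metric.eventually_nhds_iff.1 hev
  set s := δ / 4 with hs
  have hs0 : 0 < s := by positivity
  set b := a + s • v with hb
  have hba : b - a = s • v := by simp [hb]
  have hnb : ‖b - a‖ = s := by rw [hba, norm_smul, hv]; simp [abs_of_pos hs0]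
  let ψ : E → ℝ := fun y => w y + c * s ^ 2 * Real.log (‖y - b‖ ^ 2 + ε * s ^ 2)
  have hNpos : ∀ y : E, 0 < ‖y - b‖ ^ 2 + ε * s ^ 2 := fun y => by positivity
  have hψd : ∀ y, HasFDerivAt ψ (fderiv ℝ w y + (c * s ^ 2) •
      ((‖y - b‖ ^ 2 + ε * s ^ 2)⁻¹ • (2 • (innerSL ℝ (y - b))))) y := by
    intro y
    have h1 : HasFDerivAt (fun y : E => ‖y - b‖ ^ 2) (2 • (innerSL ℝ (y - b))) y := by
      have := ((hasFDerivAt_id (𝕜 := ℝ) y).sub_const b).norm_sq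
      simpa using this
    have h2 := ((h1.add_const (ε * s ^ 2)).log (hNpos y).ne').const_mul (c * s ^ 2)
    exact (hw y).hasFDerivAt.add h2
  have hψc : Continuous ψ := continuous_iff_continuousAt.2 fun y => (hψd y).continuousAt
  obtain ⟨y, hy, hmin⟩ := (isCompact_closedBall b (s / 2)).exists_isMinOn
    ⟨b, mem_closedBall_self (by positivity)⟩ hψc.continuousOn
  rw [mem_closedBall, dist_eq_norm] at hy
  have hmb := hmin (mem_closedBall_self (x := b) (ε := s/2) (by positivity))
  have hlt : ‖y - b‖ < s / 2 := by
    rcases hy.lt_or_eq with h | h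
    · exact h
    exfalso
    simp only [ψ, Set.mem_ofPred_eq, sub_self, norm_zero, h] at hmb
    have e1 : w b ≤ β * s ^ 2 := by rw [← hnb]; exact hwub b
    have e2 := hw0 y
    have e3 : Real.log (s ^ 2) - Real.log 4 ≤ Real.log ((s / 2) ^ 2 + ε * s ^ 2) := by
      rw [← Real.log_div (by positivity) (by norm_num)]
      apply Real.log_le_log (by positivity)
      have : 0 < ε * s ^ 2 := by positivity
      nlinarith
    have e4 : Real.log ((0:ℝ) ^ 2 + ε * s ^ 2) = Real.log ε + Real.log (s ^ 2) := by
      rw [← Real.log_mul (by positivity) (by positivity)]; simp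
    rw [e4] at hmb
    have e5 := mul_le_mul_of_nonneg_left e3 (by positivity : 0 ≤ c * s ^ 2)
    have e6 := mul_lt_mul_of_pos_right hεc (by positivity : 0 < s ^ 2)
    nlinarith
  have hloc : IsLocalMin ψ y := by
    refine hmin.isLocalMin (Filter.mem_of_superset (isOpen_ball.mem_nhds ?_) ball_subset_closedBall)
    rwa [mem_ball, dist_eq_norm]
  have h0 := hloc.hasFDerivAt_eq_zero (hψd y)
  have h1 := congrArg (fun T : E →L[ℝ] ℝ => T (f y)) h0
  simp at h1
  have hd := hdec y
  set r := ‖y - b‖ with hr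
  have hr0 : 0 ≤ r := norm_nonneg _
  set N := r ^ 2 + ε * s ^ 2 with hN
  have hN0 : 0 < N := hNpos y
  have hya : s / 2 ≤ ‖y - a‖ := by
    have : b - a = (y - a) - (y - b) := by abel
    have h3 := norm_sub_le (y - a) (y - b)
    rw [← this, hnb] at h3
    linarith
  have hya2 : ‖y - a‖ ≤ 2 * s := by
    have : y - a = (y - b) + (b - a) := by abel
    rw [this]
    have h3 := norm_add_le (y - b) (b - a)
    rw [hnb] at h3
    linarith
  have hfy : ‖f y‖ ≤ ‖A‖ * r + Real.sqrt ε * (2 * s) := by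
    have h4 := hball (y := y) (by rw [dist_eq_norm]; linarith)
    rw [hfa, sub_zero] at h4
    have h5 : A (y - a) = A (y - b) := by
      have : y - a = (y - b) + s • v := by rw [← hba]; abel
      rw [this, map_add, map_smul, hAv]; simp
    rw [h5] at h4
    have h6 := A.le_opNorm (y - b)
    have h7 : ‖f y‖ ≤ ‖f y - A (y - b)‖ + ‖A (y - b)‖ := by
      simpa using norm_add_le (f y - A (y - b)) (A (y - b))
    have h8 := mul_le_mul_of_nonneg_left hya2 hη.le
    linarith
  have hin : -(r * ‖f y‖) ≤ ⟪y - b, f y⟫ := by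
    have := abs_real_inner_le_norm (y - b) (f y)
    exact (abs_le.1 this).1
  have hin' : ⟪f y, y - b⟫ = ⟪y - b, f y⟫ := real_inner_comm _ _
  have hin2 : ⟪y - b, f y⟫ ≤ r * ‖f y‖ := real_inner_le_norm _ _
  have k1 : γ * (s ^ 2 / 4) ≤ c * s ^ 2 * (N⁻¹ * (2 * ⟪y - b, f y⟫)) := by
    have : s ^ 2 / 4 ≤ ‖y - a‖ ^ 2 := by nlinarith
    rw [← inner_sub_left] at h1
    have := mul_le_mul_of_nonneg_left this hγ.le
    linarith
  have k2 : γ / 4 * N ≤ 2 * c * (r * ‖f y‖) := by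
    have : c * s ^ 2 * (N⁻¹ * (2 * ⟪y - b, f y⟫)) = s ^ 2 * (2 * c * ⟪y - b, f y⟫ / N) := by
      field_simp
    rw [this] at k1
    have k3 : γ / 4 ≤ 2 * c * ⟪y - b, f y⟫ / N := by
      have : 0 < s ^ 2 := by positivity
      by_contra hcon
      push Not at hcon
      nlinarith
    rw [le_div_iff₀ hN0] at k3
    have := mul_le_mul_of_nonneg_left hin2 (by positivity : 0 ≤ 2 * c)
    linarith
  have k4 : r * ‖f y‖ ≤ ‖A‖ * r ^ 2 + N := by
    have k41 := mul_le_mul_of_nonneg_left hfy hr0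
    have hsq : Real.sqrt ε ^ 2 = ε := Real.sq_sqrt hε.le
    have : 2 * r * (Real.sqrt ε * s) ≤ N := by
      have k42 := sq_nonneg (r - Real.sqrt ε * s)
      have k43 : (r - Real.sqrt ε * s) ^ 2 = r ^ 2 + Real.sqrt ε ^ 2 * s ^ 2
        - 2 * r * (Real.sqrt ε * s) := by ring
      rw [hsq] at k43
      linarith
    have k44 : r * (‖A‖ * r + Real.sqrt ε * (2 * s)) =
      ‖A‖ * r ^ 2 + 2 * r * (Real.sqrt ε * s) := by ring
    linarith
  have k5 : ‖A‖ * r ^ 2 ≤ ‖A‖ * N := by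
    apply mul_le_mul_of_nonneg_left _ (norm_nonneg _)
    have : 0 < ε * s ^ 2 := by positivity
    linarith
  have k6 : r * ‖f y‖ ≤ ‖A‖ * N + N := by linarith
  have k7 := mul_le_mul_of_nonneg_left k6 (by positivity : 0 ≤ 2 * c)
  have k8 : 2 * c * (‖A‖ * N + N) = γ / 8 * N := by rw [← hcA]; ring
  have k9 := mul_pos hγ hN0
  linarith

/-- Barbalat, integral form. -/
lemma aux_barbalat1 (V V' w : ℝ → ℝ) (m c : ℝ) (hc : 0 < c) (hV : ∀ t ≥ (0:ℝ), HasDerivAt V (V' t) t)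
    (hV' : ∀ t ≥ (0:ℝ), V' t ≤ -c * w t) (hm : ∀ t ≥ (0:ℝ), m ≤ V t) (hw : ∀ t, 0 ≤ w t)
    (huc : UniformContinuousOn w (Set.Ici 0)) : Tendsto w atTop (𝓝 0) := by
  have hanti : AntitoneOn V (Set.Ici 0) := by
    apply antitoneOn_of_deriv_nonpos (convex_Ici 0)
    · exact fun t ht => (hV t ht).continuousAt.continuousWithinAt
    · intro t ht
      rw [interior_Ici] at ht
      exact (hV t (le_of_lt ht)).differentiableAt.differentiableWithinAt
    · intro t ht
      rw [interior_Ici] at ht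
      rw [(hV t (le_of_lt ht)).deriv]
      have := hV' t (le_of_lt ht)
      have := mul_nonneg hc.le (hw t)
      linarith
  -- infimum
  set S := V '' Set.Ici 0 with hS
  have hne : S.Nonempty := ⟨V 0, 0, Set.self_mem_Ici, rfl⟩
  have hbd : BddBelow S := ⟨m, by rintro _ ⟨t, ht, rfl⟩; exact hm t ht⟩
  rw [Metric.tendsto_atTop]
  intro ε hε
  obtain ⟨δ, hδ, hd⟩ := Metric.uniformContinuousOn_iff.1 huc (ε / 2) (by positivity)
  set η := c * (ε / 2) * (δ / 2) with hη
  have hη0 : 0 < η := by positivity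
  obtain ⟨_, ⟨T, hT, rfl⟩, hTlt⟩ := exists_lt_of_csInf_lt hne (lt_add_of_pos_right (sInf S) hη0)
  refine ⟨T, fun t ht => ?_⟩
  have hT0 : 0 ≤ T := hT
  have ht0 : 0 ≤ t := hT0.trans ht
  rw [Real.dist_eq, sub_zero, abs_of_nonneg (hw t)]
  by_contra hcon
  push Not at hcon
  have hlow : ∀ τ ∈ Set.Icc t (t + δ / 2), ε / 2 ≤ w τ := by
    intro τ hτ
    have := hd t ht0 τ (ht0.trans hτ.1) (by
      rw [Real.dist_eq, abs_sub_lt_iff]; constructor <;> linarith [hτ.1, hτ.2])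
    rw [Real.dist_eq, abs_sub_lt_iff] at this
    linarith
  have hle : V (t + δ / 2) - V t ≤ -(c * (ε / 2)) * (t + δ / 2 - t) := by
    apply Convex.image_sub_le_mul_sub_of_deriv_le (convex_Icc t (t + δ / 2))
    · exact fun τ hτ => (hV τ (ht0.trans hτ.1)).continuousAt.continuousWithinAt
    · intro τ hτ
      have hτ := interior_subset hτ
      exact (hV τ (ht0.trans hτ.1)).differentiableAt.differentiableWithinAt
    · intro τ hτ
      have hτ := interior_subset hτ
      rw [(hV τ (ht0.trans hτ.1)).deriv]
      have h1 := hV' τ (ht0.trans hτ.1)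
      have h2 := mul_le_mul_of_nonneg_left (hlow τ hτ) hc.le
      linarith
    · exact Set.left_mem_Icc.2 (by linarith)
    · exact Set.right_mem_Icc.2 (by linarith)
    · linarith
  have h3 : sInf S ≤ V (t + δ / 2) := csInf_le hbd ⟨_, by simp; linarith, rfl⟩
  have h4 : V t ≤ V T := hanti hT ht0 ht
  have : -(c * (ε / 2)) * (t + δ / 2 - t) = -η := by rw [hη]; ring
  linarith

/-- Barbalat, derivative form. -/
lemma aux_barbalat2 {E : Type*} [NormedAddCommGroup E] [NormedSpace ℝ E] (z z' : ℝ → E)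
    (hz : ∀ t ≥ (0:ℝ), HasDerivAt z (z' t) t) (hlim : Tendsto z atTop (𝓝 0))
    (huc : UniformContinuousOn z' (Set.Ici 0)) : Tendsto z' atTop (𝓝 0) := by
  rw [Metric.tendsto_atTop] at *
  intro ε hε
  obtain ⟨δ, hδ, hd⟩ := Metric.uniformContinuousOn_iff.1 huc (ε / 2) (by positivity)
  obtain ⟨T, hT⟩ := hlim (δ / 2 * (ε / 4)) (by positivity)
  refine ⟨max T 0, fun t ht => ?_⟩
  have htT : T ≤ t := (le_max_left _ _).trans ht
  have ht0 : 0 ≤ t := (le_max_right _ _).trans ht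
  have hmv : ‖(z (t + δ / 2) - (t + δ / 2) • z' t) - (z t - t • z' t)‖ ≤ ε / 2 * ‖t + δ / 2 - t‖ := by
    apply Convex.norm_image_sub_le_of_norm_hasDerivWithin_le (s := Set.Icc t (t + δ / 2))
      (f := fun τ => z τ - τ • z' t) (f' := fun τ => z' τ - (1:ℝ) • z' t)
    · intro τ hτ
      exact ((hz τ (ht0.trans hτ.1)).sub ((hasDerivAt_id τ).smul_const (z' t))).hasDerivWithinAt
    · intro τ hτ
      have := hd τ (ht0.trans hτ.1) t ht0 (by
        rw [Real.dist_eq, abs_sub_lt_iff]; constructor <;> linarith [hτ.1, hτ.2])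
      rw [dist_eq_norm] at this
      simpa using this.le
    · exact convex_Icc t (t + δ / 2)
    · exact Set.left_mem_Icc.2 (by linarith)
    · exact Set.right_mem_Icc.2 (by linarith)
  have h1 := hT t htT
  have h2 := hT (t + δ / 2) (by linarith)
  rw [dist_zero_right] at *
  have e : (δ / 2) • z' t = z (t + δ / 2) - z t -
      ((z (t + δ / 2) - (t + δ / 2) • z' t) - (z t - t • z' t)) := by
    rw [add_smul]; abel
  have h3 : ‖(δ / 2) • z' t‖ < δ / 2 * ε := by
    rw [e]
    have a1 := norm_sub_le (z (t + δ / 2) - z t)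
      ((z (t + δ / 2) - (t + δ / 2) • z' t) - (z t - t • z' t))
    have a2 := norm_sub_le (z (t + δ / 2)) (z t)
    have a3 : ‖t + δ / 2 - t‖ = δ / 2 := by
      rw [add_sub_cancel_left, Real.norm_eq_abs, abs_of_pos (by positivity)]
    rw [a3] at hmv
    linarith
  rw [norm_smul, Real.norm_eq_abs, abs_of_pos (by positivity)] at h3
  exact lt_of_mul_lt_mul_left h3 (by positivity)

lemma aux_uc {E F : Type*} [NormedAddCommGroup E] [NormedSpace ℝ E] [NormedAddCommGroup F]
    (X : E → E) (hX : Continuous X) (q : ℝ → E) (K : Set E) (hK : IsCompact K)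
    (hq : ∀ t ≥ (0:ℝ), HasDerivAt q (X (q t)) t) (hqK : ∀ t ≥ (0:ℝ), q t ∈ K)
    (ψ : E → F) (hψ : Continuous ψ) : UniformContinuousOn (fun t => ψ (q t)) (Set.Ici 0) := by
  obtain ⟨C, hC⟩ := (hK.image hX).isBounded.exists_norm_le
  have hlip : LipschitzOnWith (Real.toNNReal C) q (Set.Ici 0) := by
    apply Convex.lipschitzOnWith_of_nnnorm_hasDerivWithin_le (convex_Ici 0)
      (f' := fun t => X (q t))
    · exact fun t ht => (hq t ht).hasDerivWithinAt
    · intro t ht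
      rw [← NNReal.coe_le_coe, coe_nnnorm]
      exact (hC _ ⟨_, hqK t ht, rfl⟩).trans (Real.le_coe_toNNReal C)
  have := hK.uniformContinuousOn_of_continuous hψ.continuousOn
  exact this.comp hlip.uniformContinuousOn (fun t ht => hqK t ht)

lemma aux_infDist {E F : Type*} [NormedAddCommGroup E] [NormedAddCommGroup F]
    (q : ℝ → E) (K : Set E) (hK : IsCompact K) (hqK : ∀ t ≥ (0:ℝ), q t ∈ K)
    (ψ : E → F) (hψ : Continuous ψ) (hlim : Tendsto (fun t => ψ (q t)) atTop (𝓝 0))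
    (S : Set E) (hS : ∀ e, ψ e = 0 → e ∈ S) :
    Tendsto (fun t => Metric.infDist (q t) S) atTop (𝓝 0) := by
  rw [Metric.tendsto_atTop]
  intro ε hε
  have hK' : IsCompact (K ∩ {e | ε ≤ infDist e S}) :=
    hK.inter_right (isClosed_le continuous_const (continuous_infDist_pt S))
  by_cases hne : (K ∩ {e | ε ≤ infDist e S}).Nonempty
  · obtain ⟨e, he, hmin⟩ := hK'.exists_isMinOn hne hψ.norm.continuousOn
    have hpos : 0 < ‖ψ e‖ := by
      rw [norm_pos_iff]
      intro h0
      have : infDist e S = 0 := infDist_zero_of_mem (hS e h0)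
      have h2 : ε ≤ infDist e S := he.2
      linarith
    obtain ⟨T, hT⟩ := Metric.tendsto_atTop.1 hlim _ hpos
    refine ⟨max T 0, fun t ht => ?_⟩
    have h1 := hT t ((le_max_left _ _).trans ht)
    rw [dist_zero_right] at h1
    rw [Real.dist_eq, sub_zero, abs_of_nonneg infDist_nonneg]
    by_contra hcon
    push Not at hcon
    have := hmin (show q t ∈ _ from ⟨hqK t ((le_max_right _ _).trans ht), hcon⟩)
    simp only [Set.mem_ofPred_eq] at this
    linarith
  · refine ⟨0, fun t ht => ?_⟩
    rw [Real.dist_eq, sub_zero, abs_of_nonneg infDist_nonneg]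
    by_contra hcon
    push Not at hcon
    exact hne ⟨q t, hqK t ht, hcon⟩

lemma aux_pd {E F : Type*} [NormedAddCommGroup E] [InnerProductSpace ℝ E] [CompleteSpace E]
    [NormedAddCommGroup F] [InnerProductSpace ℝ F] [CompleteSpace F]
    (P : E → F → ℝ) (a : E) (b : F) (hP : DifferentiableAt ℝ (Function.uncurry P) (a, b)) :
    gradient (fun y => P y b) a = (InnerProductSpace.toDual ℝ E).symm
        ((fderiv ℝ (Function.uncurry P) (a, b)).comp (ContinuousLinearMap.inl ℝ E F)) ∧
    gradient (fun v => P a v) b = (InnerProductSpace.toDual ℝ F).symm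
        ((fderiv ℝ (Function.uncurry P) (a, b)).comp (ContinuousLinearMap.inr ℝ E F)) ∧
    (∀ v w, fderiv ℝ (Function.uncurry P) (a, b) (v, w) =
      ⟪gradient (fun y => P y b) a, v⟫ + ⟪gradient (fun v => P a v) b, w⟫) := by
  have h1 : HasFDerivAt (fun y => P y b)
      ((fderiv ℝ (Function.uncurry P) (a, b)).comp (ContinuousLinearMap.inl ℝ E F)) a :=
    HasFDerivAt.comp (f := fun y => (y, b)) a hP.hasFDerivAt (hasFDerivAt_prodMk_left a b)
  have h2 : HasFDerivAt (fun v => P a v)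
      ((fderiv ℝ (Function.uncurry P) (a, b)).comp (ContinuousLinearMap.inr ℝ E F)) b :=
    HasFDerivAt.comp (f := fun v => (a, v)) b hP.hasFDerivAt (hasFDerivAt_prodMk_right a b)
  refine ⟨by rw [gradient, h1.fderiv], by rw [gradient, h2.fderiv], fun v w => ?_⟩
  rw [gradient, gradient, h1.fderiv, h2.fderiv, InnerProductSpace.toDual_symm_apply,
    InnerProductSpace.toDual_symm_apply]
  simp only [ContinuousLinearMap.comp_apply, ContinuousLinearMap.inl_apply,
    ContinuousLinearMap.inr_apply]
  rw [← map_add]; simp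

lemma aux_fderiv_cont {E F : Type*} [NormedAddCommGroup E] [InnerProductSpace ℝ E]
    [FiniteDimensional ℝ E]
    [NormedAddCommGroup F] [InnerProductSpace ℝ F] [FiniteDimensional ℝ F]
    (f : E → F → E) (h : F → E) (W : E → F → ℝ) (α β γ : ℝ) (hα : 0 < α) (hβ : 0 < β) (hγ : 0 < γ)
    (hf_smooth : ContDiff ℝ 1 (Function.uncurry f))
    (hh_diff : Differentiable ℝ h)
    (hsteady : ∀ u, f (h u) u = 0)
    (hW_diff : Differentiable ℝ (Function.uncurry W))
    (hW_lb : ∀ x u, α * ‖x - h u‖ ^ 2 ≤ W x u)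
    (hW_ub : ∀ x u, W x u ≤ β * ‖x - h u‖ ^ 2)
    (hW_decay : ∀ x u, ⟪gradient (fun y => W y u) x, f x u⟫ ≤ -γ * ‖x - h u‖ ^ 2) :
    Continuous (fderiv ℝ h) := by
  haveI : CompleteSpace E := FiniteDimensional.complete ℝ E
  haveI : ProperSpace E := FiniteDimensional.proper ℝ E
  have hfd : Differentiable ℝ (Function.uncurry f) := hf_smooth.differentiable (by norm_num)
  have hfc : Continuous (fderiv ℝ (Function.uncurry f)) := hf_smooth.continuous_fderiv (by norm_num)
  let A : F → E →L[ℝ] E := fun u =>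
    (fderiv ℝ (Function.uncurry f) (h u, u)).comp (ContinuousLinearMap.inl ℝ E F)
  let B : F → F →L[ℝ] E := fun u =>
    (fderiv ℝ (Function.uncurry f) (h u, u)).comp (ContinuousLinearMap.inr ℝ E F)
  have hpair : Continuous fun u => fderiv ℝ (Function.uncurry f) (h u, u) :=
    hfc.comp (hh_diff.continuous.prodMk continuous_id)
  have hA : Continuous A := hpair.clm_comp continuous_const
  have hB : Continuous B := hpair.clm_comp continuous_const
  have hAd : ∀ u, HasFDerivAt (fun y => f y u) (A u) (h u) := fun u =>
    HasFDerivAt.comp (f := fun y => (y, u)) (h u) (hfd (h u, u)).hasFDerivAt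
      (hasFDerivAt_prodMk_left (h u) u)
  have hinj : ∀ u v, A u v = 0 → v = 0 := by
    intro u v hv
    by_contra hne
    have hn : ‖v‖ ≠ 0 := norm_ne_zero_iff.2 hne
    refine aux_inj (fun y => W y u) (fun y => f y u) (A u) (h u) β γ hβ hγ ?_ ?_ ?_ ?_ (hAd u)
      (hsteady u) (‖v‖⁻¹ • v) ?_ ?_
    · intro y
      exact DifferentiableAt.comp (f := fun y => (y, u)) y (hW_diff (y, u))
        (hasFDerivAt_prodMk_left y u).differentiableAt
    · intro y
      exact le_trans (by positivity) (hW_lb y u)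
    · exact fun y => hW_ub y u
    · intro y
      have := hW_decay y u
      rwa [gradient, InnerProductSpace.toDual_symm_apply] at this
    · rw [norm_smul, norm_inv, norm_norm, inv_mul_cancel₀ hn]
    · rw [map_smul, hv, smul_zero]
  have hunit : ∀ u, IsUnit (A u) := by
    intro u
    rw [ContinuousLinearMap.isUnit_iff_bijective]
    have h1 : Function.Injective (A u : E →ₗ[ℝ] E) :=
      (injective_iff_map_eq_zero _).2 (hinj u)
    exact ⟨h1, LinearMap.injective_iff_surjective.1 h1⟩
  have hcomp : ∀ u, (A u).comp (fderiv ℝ h u) + B u = 0 := by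
    intro u
    have h1 : HasFDerivAt (fun v => f (h v) v)
        ((fderiv ℝ (Function.uncurry f) (h u, u)).comp
          ((fderiv ℝ h u).prod (ContinuousLinearMap.id ℝ F))) u :=
      HasFDerivAt.comp (f := fun v => (h v, v)) u (hfd (h u, u)).hasFDerivAt
        ((hh_diff u).hasFDerivAt.prodMk (hasFDerivAt_id u))
    have h2 : (fun v => f (h v) v) = fun _ => 0 := funext hsteady
    rw [h2] at h1
    have h3 := h1.unique (hasFDerivAt_const 0 u)
    ext v
    have h4 := congrArg (fun T : F →L[ℝ] E => T v) h3
    simp only [ContinuousLinearMap.comp_apply, ContinuousLinearMap.prod_apply,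
      ContinuousLinearMap.id_apply, ContinuousLinearMap.zero_apply] at h4
    simp only [A, B, ContinuousLinearMap.add_apply, ContinuousLinearMap.comp_apply,
      ContinuousLinearMap.inl_apply, ContinuousLinearMap.inr_apply, ContinuousLinearMap.zero_apply]
    rw [← map_add]
    simpa using h4
  have heq : fderiv ℝ h = fun u => -((Ring.inverse (A u)).comp (B u)) := by
    funext u
    have h1 : B u = -((A u).comp (fderiv ℝ h u)) := eq_neg_of_add_eq_zero_right (hcomp u)
    rw [h1, ContinuousLinearMap.comp_neg, neg_neg, ← ContinuousLinearMap.comp_assoc]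
    have h2 : (Ring.inverse (A u)).comp (A u) = ContinuousLinearMap.id ℝ E :=
      Ring.inverse_mul_cancel _ (hunit u)
    rw [h2, ContinuousLinearMap.id_comp]
  rw [heq]
  have hinv : Continuous fun u => Ring.inverse (A u) := by
    rw [continuous_iff_continuousAt]
    intro u
    obtain ⟨U, hU⟩ := hunit u
    have := NormedRing.inverse_continuousAt U
    rw [hU] at this
    exact ContinuousAt.comp (g := Ring.inverse) this hA.continuousAt
  exact (hinv.clm_comp hB).neg

theorem stmt10 {n p : ℕ}
    (f : EuclideanSpace ℝ (Fin n) → EuclideanSpace ℝ (Fin p) → EuclideanSpace ℝ (Fin n))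
    (h : EuclideanSpace ℝ (Fin p) → EuclideanSpace ℝ (Fin n))
    (W : EuclideanSpace ℝ (Fin n) → EuclideanSpace ℝ (Fin p) → ℝ)
    (Φ : EuclideanSpace ℝ (Fin n) → EuclideanSpace ℝ (Fin p) → ℝ)
    (Q D : EuclideanSpace ℝ (Fin p) → EuclideanSpace ℝ (Fin p) →L[ℝ] EuclideanSpace ℝ (Fin p))
    (ℓ : ℝ≥0) (α β γ ζ L κ lam : ℝ)
    (hα : 0 < α) (hβ : 0 < β) (hγ : 0 < γ) (hζ : 0 < ζ) (hL : 0 < L)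
    (hκ : 0 < κ) (hlam : 0 < lam)
    -- plant
    (hf_smooth : ContDiff ℝ 1 (Function.uncurry f))
    (hh_diff : Differentiable ℝ h)
    (hh_lip : LipschitzWith ℓ h)
    (hsteady : ∀ u, f (h u) u = 0)
    -- Lyapunov function for the plant
    (hW_diff : Differentiable ℝ (Function.uncurry W))
    (hW_lb : ∀ x u, α * ‖x - h u‖ ^ 2 ≤ W x u)
    (hW_ub : ∀ x u, W x u ≤ β * ‖x - h u‖ ^ 2)
    (hW_decay : ∀ x u, ⟪gradient (fun y => W y u) x, f x u⟫ ≤ -γ * ‖x - h u‖ ^ 2)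
    (hW_gradu : ∀ x u, ‖gradient (fun v => W x v) u‖ ≤ ζ * ‖x - h u‖)
    -- objective
    (hΦ_smooth : ContDiff ℝ 1 (Function.uncurry Φ))
    (hlevel : ∀ c : ℝ, IsCompact {u : EuclideanSpace ℝ (Fin p) | Φ (h u) u ≤ c})
    (hLbound : ∀ x x' u,
      ‖(ContinuousLinearMap.adjoint (fderiv ℝ h u)
            (gradient (fun y => Φ y u) x' - gradient (fun y => Φ y u) x) +
          (gradient (fun v => Φ x' v) u - gradient (fun v => Φ x v) u))‖ ≤ L * ‖x' - x‖)
    -- metric and damping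
    (hQ_lip : LocallyLipschitz Q) (hD_lip : LocallyLipschitz D)
    (hQ_symm : ∀ u v w, ⟪Q u v, w⟫ = ⟪v, Q u w⟫)
    (hQ_pos : ∀ u v, v ≠ 0 → 0 < ⟪Q u v, v⟫)
    (hD_symm : ∀ u v w, ⟪D u v, w⟫ = ⟪v, D u w⟫)
    (hD_pos : ∀ u v, v ≠ 0 → 0 < ⟪D u v, v⟫)
    (hQ_bound : ∀ u, ‖Q u‖ ≤ κ)
    (hD_bound : ∀ u z, lam * ‖z‖ ^ 2 ≤ ⟪D u z, z⟫)
    (hgain : κ ^ 2 / lam < γ / (ζ * L))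
    -- a complete solution of the interconnection
    (x : ℝ → EuclideanSpace ℝ (Fin n)) (u z : ℝ → EuclideanSpace ℝ (Fin p))
    (hsolx : ∀ t ≥ (0 : ℝ), HasDerivAt x (f (x t) (u t)) t)
    (hsolu : ∀ t ≥ (0 : ℝ), HasDerivAt u (Q (u t) (z t)) t)
    (hsolz : ∀ t ≥ (0 : ℝ), HasDerivAt z
      (-(D (u t) (z t)) - Q (u t) (ContinuousLinearMap.adjoint (fderiv ℝ h (u t))
          (gradient (fun y => Φ y (u t)) (x t)) +
        gradient (fun v => Φ (x t) v) (u t))) t) :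
    Tendsto (fun t => Metric.infDist (x t, u t, z t)
      {q : EuclideanSpace ℝ (Fin n) × EuclideanSpace ℝ (Fin p) × EuclideanSpace ℝ (Fin p) |
        q.2.2 = 0 ∧ q.1 = h q.2.1 ∧
        ContinuousLinearMap.adjoint (fderiv ℝ h q.2.1) (gradient (fun y => Φ y q.2.1) q.1) +
          gradient (fun v => Φ q.1 v) q.2.1 = 0})
      atTop (nhds 0) := by
  have hDh : Continuous (fderiv ℝ h) := aux_fderiv_cont f h W α β γ hα hβ hγ hf_smooth hh_diff
    hsteady hW_diff hW_lb hW_ub hW_decay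
  have hΦd : Differentiable ℝ (Function.uncurry Φ) := hΦ_smooth.differentiable (by norm_num)
  have hΦc : Continuous (fderiv ℝ (Function.uncurry Φ)) := hΦ_smooth.continuous_fderiv (by norm_num)
  -- the reduced gradient
  obtain ⟨G, hG⟩ : ∃ G : EuclideanSpace ℝ (Fin n) → EuclideanSpace ℝ (Fin p) →
      EuclideanSpace ℝ (Fin p), ∀ a b, G a b = ContinuousLinearMap.adjoint (fderiv ℝ h b)
            (gradient (fun y => Φ y b) a) + gradient (fun v => Φ a v) b :=
    ⟨_, fun _ _ => rfl⟩
  have hGL : ∀ x x' u, ‖G x' u - G x u‖ ≤ L * ‖x' - x‖ := by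
    intro x x' u
    have := hLbound x x' u
    rw [map_sub] at this
    rw [hG, hG]
    convert this using 2
    abel
  have hg1 : Continuous fun q : EuclideanSpace ℝ (Fin n) × EuclideanSpace ℝ (Fin p) =>
      gradient (fun y => Φ y q.2) q.1 := by
    have : (fun q : EuclideanSpace ℝ (Fin n) × EuclideanSpace ℝ (Fin p) =>
      gradient (fun y => Φ y q.2) q.1) = _ := funext fun q => (aux_pd Φ q.1 q.2 (hΦd _)).1
    rw [this]
    exact (LinearIsometryEquiv.continuous _).comp (hΦc.clm_comp continuous_const)
  have hg2 : Continuous fun q : EuclideanSpace ℝ (Fin n) × EuclideanSpace ℝ (Fin p) =>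
      gradient (fun v => Φ q.1 v) q.2 := by
    have : (fun q : EuclideanSpace ℝ (Fin n) × EuclideanSpace ℝ (Fin p) =>
      gradient (fun v => Φ q.1 v) q.2) = _ := funext fun q => (aux_pd Φ q.1 q.2 (hΦd _)).2.1
    rw [this]
    exact (LinearIsometryEquiv.continuous _).comp (hΦc.clm_comp continuous_const)
  have hGc : Continuous (Function.uncurry G) := by
    have : Function.uncurry G = fun q => ContinuousLinearMap.adjoint (fderiv ℝ h q.2)
            (gradient (fun y => Φ y q.2) q.1) + gradient (fun v => Φ q.1 v) q.2 :=
      funext fun q => hG q.1 q.2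
    rw [this]
    refine Continuous.add (Continuous.clm_apply ?_ hg1) hg2
    exact (LinearIsometryEquiv.continuous _).comp (hDh.comp continuous_snd)
  simp only [← hG] at hsolz ⊢
  clear hLbound
  -- Lyapunov function
  set μ := L / ζ with hμ
  have hμ0 : 0 < μ := by positivity
  let V : ℝ → ℝ := fun t => Φ (h (u t)) (u t) + 1 / 2 * ‖z t‖ ^ 2 + μ * W (x t) (u t)
  let V' : ℝ → ℝ := fun t => ⟪G (h (u t)) (u t), Q (u t) (z t)⟫ +
    1 / 2 * (2 * ⟪z t, -(D (u t) (z t)) - Q (u t) (G (x t) (u t))⟫) +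
    μ * (⟪gradient (fun y => W y (u t)) (x t), f (x t) (u t)⟫ +
      ⟪gradient (fun v => W (x t) v) (u t), Q (u t) (z t)⟫)
  have hVd : ∀ t ≥ (0:ℝ), HasDerivAt V (V' t) t := by
    intro t ht
    have h1 : HasDerivAt (fun t => Φ (h (u t)) (u t)) ⟪G (h (u t)) (u t), Q (u t) (z t)⟫ t := by
      have a1 := ((hh_diff (u t)).hasFDerivAt.comp_hasDerivAt t (hsolu t ht)).prodMk (hsolu t ht)
      have a2 := (hΦd (h (u t), u t)).hasFDerivAt.comp_hasDerivAt
        (f := fun t => (h (u t), u t)) t a1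
      rw [(aux_pd Φ _ _ (hΦd (h (u t), u t))).2.2] at a2
      rw [hG, inner_add_left, ContinuousLinearMap.adjoint_inner_left]
      exact a2
    have h2 : HasDerivAt (fun t => W (x t) (u t))
        (⟪gradient (fun y => W y (u t)) (x t), f (x t) (u t)⟫ +
      ⟪gradient (fun v => W (x t) v) (u t), Q (u t) (z t)⟫) t := by
      have a1 := (hsolx t ht).prodMk (hsolu t ht)
      have a2 := (hW_diff (x t, u t)).hasFDerivAt.comp_hasDerivAt
        (f := fun t => (x t, u t)) t a1
      rw [(aux_pd W _ _ (hW_diff (x t, u t))).2.2] at a2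
      exact a2
    exact (h1.add ((hsolz t ht).norm_sq.const_mul (1 / 2))).add (h2.const_mul μ)
  have hgain' : κ ^ 2 * (ζ * L) < γ * lam := by
    rwa [div_lt_div_iff₀ hlam (by positivity)] at hgain
  -- the quadratic form is negative definite
  obtain ⟨c, hc, hquad⟩ : ∃ c : ℝ, 0 < c ∧ ∀ a b : ℝ, 0 ≤ a → 0 ≤ b →
      -lam * a ^ 2 + 2 * (κ * L) * a * b - μ * γ * b ^ 2 ≤ -c * (a ^ 2 + b ^ 2) := by
    have hkey : (κ * L) ^ 2 < lam * (μ * γ) := by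
      have : lam * (μ * γ) = (γ * lam) * (L / ζ) := by rw [hμ]; ring
      rw [this]
      have h2 := mul_lt_mul_of_pos_right hgain' (by positivity : 0 < L / ζ)
      have h3 : κ ^ 2 * (ζ * L) * (L / ζ) = (κ * L) ^ 2 := by field_simp
      linarith
    set M := μ * γ with hM
    have hM0 : 0 < M := by positivity
    set k := κ * L with hk
    -- c = (lam M - k^2) / (lam + M)
    set c := (lam * M - k ^ 2) / (lam + M) with hcdef
    have hc : 0 < c := div_pos (by linarith) (by positivity)
    have hcm : c * (lam + M) = lam * M - k ^ 2 := by rw [hcdef]; field_simp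
    have hcl : c < lam := by
      rw [hcdef, div_lt_iff₀ (by positivity)]
      nlinarith [sq_nonneg k]
    refine ⟨c, hc, fun a b _ _ => ?_⟩
    have hl : 0 < lam - c := by linarith
    have e : (lam - c) * ((lam - c) * a ^ 2 - 2 * k * a * b + (M - c) * b ^ 2) =
        ((lam - c) * a - k * b) ^ 2 + (lam * M - k ^ 2 - c * (lam + M) + c ^ 2) * b ^ 2 := by ring
    rw [hcm] at e
    have e2 : 0 ≤ (lam - c) * ((lam - c) * a ^ 2 - 2 * k * a * b + (M - c) * b ^ 2) := by
      rw [e]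
      have : lam * M - k ^ 2 - (lam * M - k ^ 2) + c ^ 2 = c ^ 2 := by ring
      rw [this]; positivity
    have e3 := nonneg_of_mul_nonneg_right e2 hl
    linarith
  have hV' : ∀ t ≥ (0:ℝ), V' t ≤ -c * (‖z t‖ ^ 2 + ‖x t - h (u t)‖ ^ 2) := by
    intro t _
    refine le_trans ?_ (hquad ‖z t‖ ‖x t - h (u t)‖ (norm_nonneg _) (norm_nonneg _))
    have hQz : ‖Q (u t) (z t)‖ ≤ κ * ‖z t‖ :=
      ((Q (u t)).le_opNorm _).trans (mul_le_mul_of_nonneg_right (hQ_bound _) (norm_nonneg _))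
    have b1 : ⟪G (h (u t)) (u t) - G (x t) (u t), Q (u t) (z t)⟫ ≤
        (L * ‖x t - h (u t)‖) * (κ * ‖z t‖) := by
      refine (real_inner_le_norm _ _).trans (mul_le_mul ?_ hQz (norm_nonneg _) (by positivity))
      rw [norm_sub_rev (x t)]
      exact hGL _ _ _
    have b2 : ⟪gradient (fun v => W (x t) v) (u t), Q (u t) (z t)⟫ ≤
        (ζ * ‖x t - h (u t)‖) * (κ * ‖z t‖) :=
      (real_inner_le_norm _ _).trans
        (mul_le_mul (hW_gradu _ _) hQz (norm_nonneg _) (by positivity))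
    have b3 := hW_decay (x t) (u t)
    have b4 := hD_bound (u t) (z t)
    have b5 : ⟪z t, -(D (u t) (z t)) - Q (u t) (G (x t) (u t))⟫ =
        -⟪D (u t) (z t), z t⟫ - ⟪G (x t) (u t), Q (u t) (z t)⟫ := by
      rw [inner_sub_right, inner_neg_right, ← hQ_symm, real_inner_comm (z t) (D (u t) (z t)),
        real_inner_comm (G (x t) (u t))]
    rw [inner_sub_left] at b1
    have b6 := mul_le_mul_of_nonneg_left (add_le_add b3 b2) hμ0.le
    have b7 : μ * ζ = L := by rw [hμ]; field_simp
    have b8 : μ * (-γ * ‖x t - h (u t)‖ ^ 2 + ζ * ‖x t - h (u t)‖ * (κ * ‖z t‖)) =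
      - μ * γ * ‖x t - h (u t)‖ ^ 2 + (μ * ζ) * ‖x t - h (u t)‖ * (κ * ‖z t‖) := by ring
    rw [b7] at b8
    simp only [V', b5]
    linarith
  -- boundedness
  have hVle : ∀ t ≥ (0:ℝ), V t ≤ V 0 := by
    have hanti : AntitoneOn V (Set.Ici 0) := by
      apply antitoneOn_of_deriv_nonpos (convex_Ici 0)
      · exact fun t ht => (hVd t ht).continuousAt.continuousWithinAt
      · intro t ht
        rw [interior_Ici] at ht
        exact (hVd t (le_of_lt ht)).differentiableAt.differentiableWithinAt
      · intro t ht
        rw [interior_Ici] at ht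
        rw [(hVd t (le_of_lt ht)).deriv]
        have h1 := hV' t (le_of_lt ht)
        have h2 : 0 ≤ c * (‖z t‖ ^ 2 + ‖x t - h (u t)‖ ^ 2) := by positivity
        linarith
    exact fun t ht => hanti Set.self_mem_Ici ht ht
  have hWnn : ∀ a b, 0 ≤ W a b := fun a b => le_trans (by positivity) (hW_lb a b)
  set C := {v : EuclideanSpace ℝ (Fin p) | Φ (h v) v ≤ V 0} with hC
  have hCc : IsCompact C := hlevel _
  have huC : ∀ t ≥ (0:ℝ), u t ∈ C := by
    intro t ht
    have h1 := hVle t ht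
    have h2 := mul_nonneg hμ0.le (hWnn (x t) (u t))
    have h3 := sq_nonneg ‖z t‖
    change Φ (h (u t)) (u t) ≤ V 0
    have h4 : V t = Φ (h (u t)) (u t) + 1 / 2 * ‖z t‖ ^ 2 + μ * W (x t) (u t) := rfl
    linarith
  have hΦt : Continuous fun v => Φ (h v) v :=
    hΦd.continuous.comp (hh_diff.continuous.prodMk continuous_id)
  obtain ⟨m, hm⟩ := (hCc.image hΦt).bddBelow
  have hm' : ∀ t ≥ (0:ℝ), m ≤ Φ (h (u t)) (u t) := fun t ht => hm ⟨_, huC t ht, rfl⟩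
  have hVm : ∀ t ≥ (0:ℝ), m ≤ V t := by
    intro t ht
    have h2 := mul_nonneg hμ0.le (hWnn (x t) (u t))
    have h3 := sq_nonneg ‖z t‖
    have h4 : V t = Φ (h (u t)) (u t) + 1 / 2 * ‖z t‖ ^ 2 + μ * W (x t) (u t) := rfl
    have := hm' t ht
    linarith
  have hzb : ∀ t ≥ (0:ℝ), ‖z t‖ ≤ Real.sqrt (2 * (V 0 - m)) := by
    intro t ht
    apply Real.le_sqrt_of_sq_le
    have h2 := mul_nonneg hμ0.le (hWnn (x t) (u t))
    have h4 : V t = Φ (h (u t)) (u t) + 1 / 2 * ‖z t‖ ^ 2 + μ * W (x t) (u t) := rfl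
    have := hm' t ht
    have := hVle t ht
    linarith
  have heb : ∀ t ≥ (0:ℝ), ‖x t - h (u t)‖ ≤ Real.sqrt ((V 0 - m) / (μ * α)) := by
    intro t ht
    apply Real.le_sqrt_of_sq_le
    rw [le_div_iff₀ (by positivity)]
    have h2 := mul_le_mul_of_nonneg_left (hW_lb (x t) (u t)) hμ0.le
    have h3 := sq_nonneg ‖z t‖
    have h4 : V t = Φ (h (u t)) (u t) + 1 / 2 * ‖z t‖ ^ 2 + μ * W (x t) (u t) := rfl
    have := hm' t ht
    have := hVle t ht
    linarith
  obtain ⟨R, hR⟩ := (hCc.image hh_diff.continuous).isBounded.exists_norm_le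
  set R1 := Real.sqrt ((V 0 - m) / (μ * α)) + R
  set R2 := Real.sqrt (2 * (V 0 - m))
  let K : Set (EuclideanSpace ℝ (Fin n) × EuclideanSpace ℝ (Fin p) × EuclideanSpace ℝ (Fin p)) :=
    closedBall 0 R1 ×ˢ (C ×ˢ closedBall 0 R2)
  have hK : IsCompact K :=
    (isCompact_closedBall _ _).prod (hCc.prod (isCompact_closedBall _ _))
  have hqK : ∀ t ≥ (0:ℝ), (x t, u t, z t) ∈ K := by
    intro t ht
    refine ⟨?_, huC t ht, ?_⟩
    · rw [mem_closedBall, dist_zero_right]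
      have h1 : ‖x t‖ ≤ ‖x t - h (u t)‖ + ‖h (u t)‖ := by
        simpa using norm_add_le (x t - h (u t)) (h (u t))
      have h2 := hR _ ⟨_, huC t ht, rfl⟩
      have h3 := heb t ht
      simp only [R1]
      linarith
    · rw [mem_closedBall, dist_zero_right]
      exact hzb t ht
  -- the closed-loop vector field
  have hQc : Continuous Q := hQ_lip.continuous
  have hDc : Continuous D := hD_lip.continuous
  have hfc : Continuous (Function.uncurry f) := hf_smooth.continuous
  let Z : EuclideanSpace ℝ (Fin n) × EuclideanSpace ℝ (Fin p) × EuclideanSpace ℝ (Fin p) →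
    EuclideanSpace ℝ (Fin p) := fun q => -(D q.2.1 q.2.2) - Q q.2.1 (G q.1 q.2.1)
  have hZc : Continuous Z := by
    have a1 : Continuous fun q : EuclideanSpace ℝ (Fin n) × EuclideanSpace ℝ (Fin p) ×
        EuclideanSpace ℝ (Fin p) => D q.2.1 q.2.2 :=
      (hDc.comp (continuous_fst.comp continuous_snd)).clm_apply
        (continuous_snd.comp continuous_snd)
    have a2 : Continuous fun q : EuclideanSpace ℝ (Fin n) × EuclideanSpace ℝ (Fin p) ×
        EuclideanSpace ℝ (Fin p) => Q q.2.1 (G q.1 q.2.1) :=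
      (hQc.comp (continuous_fst.comp continuous_snd)).clm_apply
        (hGc.comp (continuous_fst.prodMk (continuous_fst.comp continuous_snd)))
    exact a1.neg.sub a2
  let X : EuclideanSpace ℝ (Fin n) × EuclideanSpace ℝ (Fin p) × EuclideanSpace ℝ (Fin p) →
    EuclideanSpace ℝ (Fin n) × EuclideanSpace ℝ (Fin p) × EuclideanSpace ℝ (Fin p) :=
    fun q => (f q.1 q.2.1, Q q.2.1 q.2.2, Z q)
  have hXc : Continuous X := by
    refine Continuous.prodMk ?_ (Continuous.prodMk ?_ hZc)
    · exact hfc.comp (continuous_fst.prodMk (continuous_fst.comp continuous_snd))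
    · exact (hQc.comp (continuous_fst.comp continuous_snd)).clm_apply
        (continuous_snd.comp continuous_snd)
  have hqd : ∀ t ≥ (0:ℝ), HasDerivAt (fun t => (x t, u t, z t)) (X (x t, u t, z t)) t :=
    fun t ht => (hsolx t ht).prodMk ((hsolu t ht).prodMk (hsolz t ht))
  -- z → 0, x - h(u) → 0
  have hhc := hh_diff.continuous
  have hw : Tendsto (fun t => ‖z t‖ ^ 2 + ‖x t - h (u t)‖ ^ 2) atTop (𝓝 0) := by
    refine aux_barbalat1 V V' _ m c hc hVd hV' hVm (fun t => by positivity) ?_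
    exact aux_uc X hXc (fun t => (x t, u t, z t)) K hK hqd hqK
      (fun q => ‖q.2.2‖ ^ 2 + ‖q.1 - h q.2.1‖ ^ 2) (by fun_prop)
  have hz0 : Tendsto z atTop (𝓝 0) := by
    rw [tendsto_zero_iff_norm_tendsto_zero]
    have h1 : Tendsto (fun t => ‖z t‖ ^ 2) atTop (𝓝 0) :=
      squeeze_zero (fun t => by positivity) (fun t => le_add_of_nonneg_right (by positivity)) hw
    have h2 := h1.sqrt
    simpa [Real.sqrt_sq] using h2
  have he0 : Tendsto (fun t => x t - h (u t)) atTop (𝓝 0) := by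
    rw [tendsto_zero_iff_norm_tendsto_zero]
    have h1 : Tendsto (fun t => ‖x t - h (u t)‖ ^ 2) atTop (𝓝 0) :=
      squeeze_zero (fun t => by positivity) (fun t => le_add_of_nonneg_left (by positivity)) hw
    have h2 := h1.sqrt
    simpa [Real.sqrt_sq] using h2
  have hZ0 : Tendsto (fun t => Z (x t, u t, z t)) atTop (𝓝 0) :=
    aux_barbalat2 z _ hsolz hz0
      (aux_uc X hXc (fun t => (x t, u t, z t)) K hK hqd hqK Z hZc)
  refine aux_infDist (fun t => (x t, u t, z t)) K hK hqK
    (fun q => (q.2.2, q.1 - h q.2.1, Z q)) (by fun_prop) ?_ _ ?_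
  · exact hz0.prodMk_nhds (he0.prodMk_nhds hZ0)
  · rintro ⟨a, b, d⟩ hq
    simp only [Prod.mk_eq_zero] at hq
    obtain ⟨h1, h2, h3⟩ := hq
    refine ⟨h1, sub_eq_zero.1 h2, ?_⟩
    simp only [Z, h1, map_zero, neg_zero, zero_sub, neg_eq_zero] at h3
    by_contra hne
    have := hQ_pos b (G a b) hne
    rw [h3, inner_zero_left] at this
    exact lt_irrefl _ this
end

section
/- Let f : ℝⁿ × ℝᵖ → ℝⁿ be continuously differentiable with differentiable ℓ₀-Lipschitz steady-state map h, and let W be a differentiable Lyapunov function with constants α, β, γ, ζ > 0 as above. Let g : ℝⁿ × ℝᵖ × ℝʳ → ℝᵖ and k : ℝⁿ × ℝᵖ × ℝʳ → ℝʳ be locally Lipschitz and satisfy: (i) ‖(g(x',u,z), k(x',u,z)) − (g(x,u,z), k(x,u,z))‖ ≤ L‖x' − x‖ for all x, x', u, z; (ii) the reduced vector field (g̃, k̃)(u,z) := (g(h(u),u,z), k(h(u),u,z)) is ℓ-Lipschitz; (iii) the reduced dynamics u̇ = g̃(u,z), ż = k̃(u,z) have a unique equilibrium (u*,z*) and there is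 a differentiable V : ℝᵖ × ℝʳ → ℝ and constants α', β', μ, κ > 0 with, writing e(u,z) := (u − u*, z − z*), α'‖e(u,z)‖² ≤ V(u,z) ≤ β'‖e(u,z)‖², ⟨∇V(u,z), (g̃(u,z), k̃(u,z))⟩ ≤ −μ‖e(u,z)‖², and ‖∇V(u,z)‖ ≤ κ‖e(u,z)‖. If 0 < ε < γ / (ζL(1 + κℓ/μ)), then every complete solution (x,u,z) of ẋ = f(x,u), u̇ = εg(x,u,z), ż = εk(x,u,z) converges to the point (h(u*), u*, z*). -/
open Filter Metric Real
open scoped RealInnerProductSpace Topology NNReal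

lemma aux_chain {E G : Type*} [NormedAddCommGroup E] [InnerProductSpace ℝ E] [CompleteSpace E]
    [NormedAddCommGroup G] [InnerProductSpace ℝ G] [CompleteSpace G]
    (F : E → G → ℝ) (hF : Differentiable ℝ (Function.uncurry F))
    (x : ℝ → E) (u : ℝ → G) (x' : E) (u' : G) (t : ℝ)
    (hx : HasDerivAt x x' t) (hu : HasDerivAt u u' t) :
    HasDerivAt (fun s => F (x s) (u s))
      (⟪gradient (fun y => F y (u t)) (x t), x'⟫ + ⟪gradient (fun v => F (x t) v) (u t), u'⟫) t := by
  have hD := (hF (x t, u t)).hasFDerivAt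
  set D := fderiv ℝ (Function.uncurry F) (x t, u t) with hDdef
  have h1 : HasFDerivAt (fun y => F y (u t)) (D.comp (ContinuousLinearMap.inl ℝ E G)) (x t) :=
    HasFDerivAt.comp (g := Function.uncurry F) (f := fun e => (e, u t)) (x t) hD (hasFDerivAt_prodMk_left (x t) (u t))
  have h2 : HasFDerivAt (fun v => F (x t) v) (D.comp (ContinuousLinearMap.inr ℝ E G)) (u t) :=
    HasFDerivAt.comp (g := Function.uncurry F) (f := fun e => (x t, e)) (u t) hD (hasFDerivAt_prodMk_right (x t) (u t))
  have h3 : HasDerivAt (fun s => F (x s) (u s)) (D (x', u')) t :=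
    HasFDerivAt.comp_hasDerivAt (l := Function.uncurry F) t hD (hx.prodMk hu)
  have e1 : ⟪gradient (fun y => F y (u t)) (x t), x'⟫ = D (x', 0) := by
    rw [gradient, InnerProductSpace.toDual_symm_apply, h1.fderiv]; simp
  have e2 : ⟪gradient (fun v => F (x t) v) (u t), u'⟫ = D (0, u') := by
    rw [gradient, InnerProductSpace.toDual_symm_apply, h2.fderiv]; simp
  rw [e1, e2, ← map_add]
  simpa using h3

lemma aux_decay (U U' : ℝ → ℝ) (lam : ℝ) (hlam : 0 < lam)
    (hU : ∀ t ≥ (0:ℝ), HasDerivAt U (U' t) t) (hU' : ∀ t ≥ (0:ℝ), U' t ≤ -lam * U t)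
    (hpos : ∀ t, 0 ≤ U t) : Tendsto U atTop (𝓝 0) := by
  have hd : ∀ t ≥ (0:ℝ), HasDerivAt (fun t => U t * exp (lam * t))
      (U' t * exp (lam * t) + U t * (exp (lam * t) * lam)) t := fun t ht =>
    (hU t ht).mul (by simpa using ((hasDerivAt_id t).const_mul lam).exp)
  have hanti : AntitoneOn (fun t => U t * exp (lam * t)) (Set.Ici 0) := by
    apply antitoneOn_of_deriv_nonpos (convex_Ici 0)
    · exact fun t ht => (hd t ht).continuousAt.continuousWithinAt
    · intro t ht
      rw [interior_Ici] at ht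
      exact (hd t (le_of_lt ht)).differentiableAt.differentiableWithinAt
    · intro t ht
      rw [interior_Ici] at ht
      rw [(hd t (le_of_lt ht)).deriv]
      have := mul_le_mul_of_nonneg_right (hU' t (le_of_lt ht)) (exp_pos (lam * t)).le
      linarith
  have hb : ∀ t ≥ (0:ℝ), U t ≤ U 0 * exp (-(lam * t)) := by
    intro t ht
    have h1 := hanti (Set.mem_Ici.2 le_rfl) (Set.mem_Ici.2 ht) ht
    simp only [mul_zero, exp_zero, mul_one] at h1
    rw [exp_neg, ← div_eq_mul_inv, le_div_iff₀ (exp_pos _)]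
    exact h1
  have hlim : Tendsto (fun t => U 0 * exp (-(lam * t))) atTop (𝓝 0) := by
    have : Tendsto (fun t : ℝ => exp (-(lam * t))) atTop (𝓝 0) :=
      tendsto_exp_neg_atTop_nhds_zero.comp (tendsto_id.const_mul_atTop hlam)
    simpa using this.const_mul (U 0)
  exact squeeze_zero' (Eventually.of_forall hpos)
    (eventually_atTop.2 ⟨0, hb⟩) hlim

lemma aux_quad (m q s a b : ℝ) (hm : 0 < m) (hq : 0 < q) (hs : s ^ 2 < m * q) :
    -m * a ^ 2 + 2 * s * a * b - q * b ^ 2 ≤ -((m * q - s ^ 2) / (m + q)) * (a ^ 2 + b ^ 2) := by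
  set η := (m * q - s ^ 2) / (m + q) with hη
  have hmq : 0 < m + q := by linarith
  have e : η * (m + q) = m * q - s ^ 2 := by rw [hη]; field_simp
  have h1 : 0 < m - η := by
    have : (m - η) * (m + q) = m ^ 2 + s ^ 2 := by linarith
    have h2 : 0 < (m - η) * (m + q) := by rw [this]; positivity
    exact pos_of_mul_pos_left h2 hmq.le
  have h2 : 0 ≤ (m - η) * ((m - η) * a ^ 2 - 2 * s * a * b + (q - η) * b ^ 2) := by
    have : (m - η) * ((m - η) * a ^ 2 - 2 * s * a * b + (q - η) * b ^ 2)
      = ((m - η) * a - s * b) ^ 2 + η ^ 2 * b ^ 2 := by linear_combination (-b^2) * e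
    rw [this]; positivity
  have h3 := nonneg_of_mul_nonneg_right h2 h1
  linarith

lemma aux_sqrt_le (a b c : ℝ) (h : Real.sqrt (a ^ 2 + b ^ 2) ≤ c) : a ≤ c :=
  le_trans (Real.le_sqrt_of_sq_le (by nlinarith [sq_nonneg b])) h

lemma aux_cs (a b c d : ℝ) :
    a * c + b * d ≤ Real.sqrt (a ^ 2 + b ^ 2) * Real.sqrt (c ^ 2 + d ^ 2) := by
  rw [← Real.sqrt_mul (by positivity)]
  apply Real.le_sqrt_of_sq_le
  nlinarith [sq_nonneg (a * d - b * c)]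

/-- General feedback optimization dynamics with internal controller state:
if the reduced controller dynamics admit a Lyapunov function with constants
`μ, κ` and `0 < ε < γ/(ζL(1 + κℓ/μ))`, then every complete solution of
`ẋ = f(x,u)`, `u̇ = εg(x,u,z)`, `ż = εk(x,u,z)` converges to `(h(u*),u*,z*)`. -/
theorem stmt11 {n p r : ℕ}
    (f : EuclideanSpace ℝ (Fin n) → EuclideanSpace ℝ (Fin p) → EuclideanSpace ℝ (Fin n))
    (h : EuclideanSpace ℝ (Fin p) → EuclideanSpace ℝ (Fin n))
    (W : EuclideanSpace ℝ (Fin n) → EuclideanSpace ℝ (Fin p) → ℝ)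
    (g : EuclideanSpace ℝ (Fin n) → EuclideanSpace ℝ (Fin p) → EuclideanSpace ℝ (Fin r) →
      EuclideanSpace ℝ (Fin p))
    (k : EuclideanSpace ℝ (Fin n) → EuclideanSpace ℝ (Fin p) → EuclideanSpace ℝ (Fin r) →
      EuclideanSpace ℝ (Fin r))
    (V : EuclideanSpace ℝ (Fin p) → EuclideanSpace ℝ (Fin r) → ℝ)
    (us : EuclideanSpace ℝ (Fin p)) (zs : EuclideanSpace ℝ (Fin r))
    (ℓ₀ : ℝ≥0) (α β γ ζ L ℓ α' β' μ κ ε : ℝ)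
    (hα : 0 < α) (hβ : 0 < β) (hγ : 0 < γ) (hζ : 0 < ζ) (hL : 0 < L) (hℓ : 0 < ℓ)
    (hα' : 0 < α') (hβ' : 0 < β') (hμ : 0 < μ) (hκ : 0 < κ)
    -- plant
    (hf_smooth : ContDiff ℝ 1 (Function.uncurry f))
    (hh_diff : Differentiable ℝ h)
    (hh_lip : LipschitzWith ℓ₀ h)
    (hsteady : ∀ u, f (h u) u = 0)
    -- Lyapunov function for the plant
    (hW_diff : Differentiable ℝ (Function.uncurry W))
    (hW_lb : ∀ x u, α * ‖x - h u‖ ^ 2 ≤ W x u)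
    (hW_ub : ∀ x u, W x u ≤ β * ‖x - h u‖ ^ 2)
    (hW_decay : ∀ x u, ⟪gradient (fun y => W y u) x, f x u⟫ ≤ -γ * ‖x - h u‖ ^ 2)
    (hW_gradu : ∀ x u, ‖gradient (fun v => W x v) u‖ ≤ ζ * ‖x - h u‖)
    -- controller vector fields
    (hg_lip : LocallyLipschitz (fun q : EuclideanSpace ℝ (Fin n) ×
      EuclideanSpace ℝ (Fin p) × EuclideanSpace ℝ (Fin r) => g q.1 q.2.1 q.2.2))
    (hk_lip : LocallyLipschitz (fun q : EuclideanSpace ℝ (Fin n) ×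
      EuclideanSpace ℝ (Fin p) × EuclideanSpace ℝ (Fin r) => k q.1 q.2.1 q.2.2))
    -- (i) Lipschitz in x
    (hLbound : ∀ x x' u z,
      Real.sqrt (‖g x' u z - g x u z‖ ^ 2 + ‖k x' u z - k x u z‖ ^ 2) ≤ L * ‖x' - x‖)
    -- (ii) the reduced vector field is ℓ-Lipschitz
    (hred_lip : ∀ u u' z z',
      Real.sqrt (‖g (h u') u' z' - g (h u) u z‖ ^ 2 + ‖k (h u') u' z' - k (h u) u z‖ ^ 2) ≤
        ℓ * Real.sqrt (‖u' - u‖ ^ 2 + ‖z' - z‖ ^ 2))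
    -- (iii) unique equilibrium of the reduced dynamics with Lyapunov function V
    (heq : g (h us) us zs = 0 ∧ k (h us) us zs = 0)
    (huniq : ∀ u z, g (h u) u z = 0 → k (h u) u z = 0 → u = us ∧ z = zs)
    (hV_diff : Differentiable ℝ (Function.uncurry V))
    (hV_lb : ∀ u z, α' * (‖u - us‖ ^ 2 + ‖z - zs‖ ^ 2) ≤ V u z)
    (hV_ub : ∀ u z, V u z ≤ β' * (‖u - us‖ ^ 2 + ‖z - zs‖ ^ 2))
    (hV_decay : ∀ u z,
      ⟪gradient (fun v => V v z) u, g (h u) u z⟫ + ⟪gradient (fun w => V u w) z, k (h u) u z⟫ ≤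
        -μ * (‖u - us‖ ^ 2 + ‖z - zs‖ ^ 2))
    (hV_grad : ∀ u z,
      Real.sqrt (‖gradient (fun v => V v z) u‖ ^ 2 + ‖gradient (fun w => V u w) z‖ ^ 2) ≤
        κ * Real.sqrt (‖u - us‖ ^ 2 + ‖z - zs‖ ^ 2))
    -- gain condition
    (hε : 0 < ε) (hεbound : ε < γ / (ζ * L * (1 + κ * ℓ / μ)))
    -- a complete solution of the interconnection
    (x : ℝ → EuclideanSpace ℝ (Fin n)) (u : ℝ → EuclideanSpace ℝ (Fin p))
    (z : ℝ → EuclideanSpace ℝ (Fin r))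
    (hsolx : ∀ t ≥ (0 : ℝ), HasDerivAt x (f (x t) (u t)) t)
    (hsolu : ∀ t ≥ (0 : ℝ), HasDerivAt u (ε • g (x t) (u t) (z t)) t)
    (hsolz : ∀ t ≥ (0 : ℝ), HasDerivAt z (ε • k (x t) (u t) (z t)) t) :
    Tendsto (fun t => (x t, u t, z t)) atTop
      (nhds ((h us, us, zs) : EuclideanSpace ℝ (Fin n) ×
        EuclideanSpace ℝ (Fin p) × EuclideanSpace ℝ (Fin r))) := by
  set a : ℝ → ℝ := fun t => ‖x t - h (u t)‖ with ha
  set b : ℝ → ℝ := fun t => Real.sqrt (‖u t - us‖ ^ 2 + ‖z t - zs‖ ^ 2) with hb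
  have ha0 : ∀ t, 0 ≤ a t := fun t => norm_nonneg _
  have hb0 : ∀ t, 0 ≤ b t := fun t => Real.sqrt_nonneg _
  have hbsq : ∀ t, b t ^ 2 = ‖u t - us‖ ^ 2 + ‖z t - zs‖ ^ 2 :=
    fun t => Real.sq_sqrt (by positivity)
  -- composite Lyapunov function
  set c : ℝ := ζ * ℓ / (κ * L) with hc
  have hc0 : 0 < c := by positivity
  have hckL : c * (κ * L) = ζ * ℓ := by rw [hc]; field_simp
  have hεb : ε * (ζ * L * (μ + κ * ℓ)) < γ * μ := by
    rw [lt_div_iff₀ (by positivity)] at hεbound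
    have h1 := mul_lt_mul_of_pos_right hεbound hμ
    have h2 : ε * (ζ * L * (1 + κ * ℓ / μ)) * μ = ε * (ζ * L * (μ + κ * ℓ)) := by field_simp
    linarith
  set m : ℝ := γ - ε * ζ * L with hm
  have hmk : ε * ζ * L * κ * ℓ < m * μ := by rw [hm]; linarith
  have hm0 : 0 < m := by
    have h2 : 0 < m * μ := lt_trans (by positivity) hmk
    exact pos_of_mul_pos_left h2 hμ.le
  set q : ℝ := c * ε * μ with hq
  have hq0 : 0 < q := by positivity
  have hs : (ε * ζ * ℓ) ^ 2 < m * q := by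
    have h1 := mul_lt_mul_of_pos_left hmk (mul_pos hc0 hε)
    have h2 : c * ε * (ε * ζ * L * κ * ℓ) = (ε * ζ * ℓ) ^ 2 := by
      linear_combination (ε ^ 2 * ζ * ℓ) * hckL
    rw [h2] at h1
    rw [hq]; linarith
  set η : ℝ := (m * q - (ε * ζ * ℓ) ^ 2) / (m + q) with hη
  have hη0 : 0 < η := div_pos (by linarith) (by linarith)
  set U : ℝ → ℝ := fun t => W (x t) (u t) + c * V (u t) (z t) with hU
  set U' : ℝ → ℝ := fun t =>
    (⟪gradient (fun y => W y (u t)) (x t), f (x t) (u t)⟫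
      + ⟪gradient (fun v => W (x t) v) (u t), ε • g (x t) (u t) (z t)⟫)
    + c * (⟪gradient (fun v => V v (z t)) (u t), ε • g (x t) (u t) (z t)⟫
      + ⟪gradient (fun w => V (u t) w) (z t), ε • k (x t) (u t) (z t)⟫) with hU'
  have hderiv : ∀ t ≥ (0:ℝ), HasDerivAt U (U' t) t := fun t ht =>
    (aux_chain W hW_diff x u _ _ t (hsolx t ht) (hsolu t ht)).add
      ((aux_chain V hV_diff u z _ _ t (hsolu t ht) (hsolz t ht)).const_mul c)
  have hUlb : ∀ t, α * a t ^ 2 + c * (α' * b t ^ 2) ≤ U t := by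
    intro t
    rw [hbsq]
    exact add_le_add (hW_lb _ _) (mul_le_mul_of_nonneg_left (hV_lb _ _) hc0.le)
  have hUub : ∀ t, U t ≤ β * a t ^ 2 + c * (β' * b t ^ 2) := by
    intro t
    rw [hbsq]
    exact add_le_add (hW_ub _ _) (mul_le_mul_of_nonneg_left (hV_ub _ _) hc0.le)
  have hU'bd : ∀ t, U' t ≤ -η * (a t ^ 2 + b t ^ 2) := by
    intro t
    have w1 := hW_decay (x t) (u t)
    have g1 : ‖g (x t) (u t) (z t) - g (h (u t)) (u t) (z t)‖ ≤ L * a t :=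
      aux_sqrt_le _ _ _ (hLbound (h (u t)) (x t) (u t) (z t))
    have g2 : ‖g (h (u t)) (u t) (z t)‖ ≤ ℓ * b t := by
      have := aux_sqrt_le _ _ _ (hred_lip us (u t) zs (z t))
      rwa [heq.1, sub_zero] at this
    have g3 : ‖g (x t) (u t) (z t)‖ ≤ L * a t + ℓ * b t := by
      have := norm_add_le (g (x t) (u t) (z t) - g (h (u t)) (u t) (z t))
        (g (h (u t)) (u t) (z t))
      rw [sub_add_cancel] at this
      linarith
    have w2 : ⟪gradient (fun v => W (x t) v) (u t), g (x t) (u t) (z t)⟫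
        ≤ (ζ * a t) * (L * a t + ℓ * b t) :=
      (real_inner_le_norm _ _).trans (mul_le_mul (hW_gradu _ _) g3 (norm_nonneg _)
        (mul_nonneg hζ.le (ha0 t)))
    have v1 := hV_decay (u t) (z t)
    have v2 : ⟪gradient (fun v => V v (z t)) (u t),
          g (x t) (u t) (z t) - g (h (u t)) (u t) (z t)⟫
        + ⟪gradient (fun w => V (u t) w) (z t),
          k (x t) (u t) (z t) - k (h (u t)) (u t) (z t)⟫ ≤ (κ * b t) * (L * a t) := by
      refine (add_le_add (real_inner_le_norm _ _) (real_inner_le_norm _ _)).trans ?_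
      refine (aux_cs _ _ _ _).trans ?_
      exact mul_le_mul (hV_grad _ _) (hLbound _ _ _ _) (Real.sqrt_nonneg _)
        (mul_nonneg hκ.le (hb0 t))
    rw [inner_sub_right, inner_sub_right] at v2
    rw [← hbsq] at v1
    have key := aux_quad m q (ε * ζ * ℓ) (a t) (b t) hm0 hq0 hs
    rw [← hη] at key
    refine le_trans ?_ key
    simp only [hU', inner_smul_right]
    have w2' := mul_le_mul_of_nonneg_left w2 hε.le
    have v3 := mul_le_mul_of_nonneg_left (add_le_add v1 v2) (mul_pos hc0 hε).le
    have e1 : c * ε * (-μ * b t ^ 2 + κ * b t * (L * a t))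
        = - q * b t ^ 2 + ε * ζ * ℓ * a t * b t := by
      rw [hq]; linear_combination (ε * a t * b t) * hckL
    rw [e1] at v3
    rw [hm]
    change _ ≤ -γ * a t ^ 2 at w1
    linarith
  have hB : 0 < β + c * β' := by positivity
  have hU0 : ∀ t, 0 ≤ U t := fun t => le_trans (by positivity) (hUlb t)
  have hUlim : Tendsto U atTop (𝓝 0) := by
    refine aux_decay U U' (η / (β + c * β')) (div_pos hη0 hB) hderiv ?_ hU0
    intro t _
    refine (hU'bd t).trans ?_
    have h1 : U t ≤ (β + c * β') * (a t ^ 2 + b t ^ 2) := by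
      have h2 : 0 ≤ β * b t ^ 2 := by positivity
      have h3 : 0 ≤ c * β' * a t ^ 2 := by positivity
      linarith [hUub t]
    have h2 : η / (β + c * β') * U t ≤ η * (a t ^ 2 + b t ^ 2) := by
      refine (mul_le_mul_of_nonneg_left h1 (div_pos hη0 hB).le).trans (le_of_eq ?_)
      field_simp
    linarith
  have sq_lim : ∀ (F : ℝ → ℝ) (C : ℝ), 0 < C → (∀ t, 0 ≤ F t) → (∀ t, C * F t ^ 2 ≤ U t) →
      Tendsto F atTop (𝓝 0) := by
    intro F C hC hF0 hF
    have h1 : Tendsto (fun t => Real.sqrt (U t / C)) atTop (𝓝 0) := by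
      have := (Real.continuous_sqrt.tendsto _).comp (hUlim.div_const C)
      simpa [Function.comp_def] using this
    refine squeeze_zero hF0 (fun t => ?_) h1
    apply Real.le_sqrt_of_sq_le
    rw [le_div_iff₀ hC]; linarith [hF t]
  have hca : 0 < c * α' := by positivity
  have ulim : Tendsto u atTop (𝓝 us) := by
    rw [tendsto_iff_norm_sub_tendsto_zero]
    refine sq_lim _ (c * α') hca (fun t => norm_nonneg _) (fun t => ?_)
    have h1 := hUlb t
    rw [hbsq] at h1
    have h2 : 0 ≤ α * a t ^ 2 := by positivity
    have h3 : 0 ≤ c * α' * ‖z t - zs‖ ^ 2 := by positivity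
    linarith
  have zlim : Tendsto z atTop (𝓝 zs) := by
    rw [tendsto_iff_norm_sub_tendsto_zero]
    refine sq_lim _ (c * α') hca (fun t => norm_nonneg _) (fun t => ?_)
    have h1 := hUlb t
    rw [hbsq] at h1
    have h2 : 0 ≤ α * a t ^ 2 := by positivity
    have h3 : 0 ≤ c * α' * ‖u t - us‖ ^ 2 := by positivity
    linarith
  have alim : Tendsto a atTop (𝓝 0) := by
    refine sq_lim _ α hα ha0 (fun t => ?_)
    have h2 : 0 ≤ c * (α' * b t ^ 2) := by positivity
    linarith [hUlb t]
  have xlim : Tendsto x atTop (𝓝 (h us)) := by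
    have h1 : Tendsto (fun t => x t - h (u t)) atTop (𝓝 0) :=
      tendsto_zero_iff_norm_tendsto_zero.2 alim
    have h2 : Tendsto (fun t => h (u t)) atTop (𝓝 (h us)) :=
      (hh_lip.continuous.tendsto us).comp ulim
    simpa using h1.add h2
  exact xlim.prodMk_nhds (ulim.prodMk_nhds zlim)
end

section
/- Let α₁, α₂, β₁, β₂ > 0 and ξ ∈ ℝ satisfy α₁α₂ > α₁ξ + β₁β₂, and set δ = β₁/(β₁ + β₂) (so δ ∈ (0,1)). Then the symmetric 2×2 real matrix Λ with entries Λ₁₁ = −(1−δ)α₁, Λ₂₂ = −δ(α₂ − ξ), and Λ₁₂ = Λ₂₁ = ((1−δ)β₁ + δβ₂)/2 is negative definite. -/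
open Matrix

/-- The 2×2 LaSalle matrix `Λ` is negative definite when
`α₁α₂ > α₁ξ + β₁β₂` and `δ = β₁/(β₁+β₂)`. -/
theorem stmt12 (α₁ α₂ β₁ β₂ ξ δ : ℝ)
    (hα₁ : 0 < α₁) (hα₂ : 0 < α₂) (hβ₁ : 0 < β₁) (hβ₂ : 0 < β₂)
    (hgap : α₁ * ξ + β₁ * β₂ < α₁ * α₂)
    (hδ : δ = β₁ / (β₁ + β₂)) :
    ∀ v : Fin 2 → ℝ, v ≠ 0 →
      v ⬝ᵥ (!![-(1 - δ) * α₁, ((1 - δ) * β₁ + δ * β₂) / 2;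
              ((1 - δ) * β₁ + δ * β₂) / 2, -(δ * (α₂ - ξ))] *ᵥ v) < 0 := by
  intro v hv
  have hs : 0 < β₁ + β₂ := by positivity
  have h1 : 1 - δ = β₂ / (β₁ + β₂) := by rw [hδ]; field_simp; ring
  rw [h1, hδ]
  have hpos : 0 < β₂ * (α₁ * v 0 - β₁ * v 1) ^ 2
      + β₁ * (v 1) ^ 2 * (α₁ * α₂ - (α₁ * ξ + β₁ * β₂)) := by
    have hg : 0 < α₁ * α₂ - (α₁ * ξ + β₁ * β₂) := by linarith
    by_cases hy : v 1 = 0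
    · have hx : v 0 ≠ 0 := by
        intro hx
        apply hv
        ext i
        fin_cases i
        · exact hx
        · exact hy
      rw [hy]
      have : 0 < β₂ * (α₁ * v 0) ^ 2 := by positivity
      simpa using this
    · have : 0 < β₁ * (v 1) ^ 2 * (α₁ * α₂ - (α₁ * ξ + β₁ * β₂)) := by positivity
      have : 0 ≤ β₂ * (α₁ * v 0 - β₁ * v 1) ^ 2 := by positivity
      linarith
  have key : v ⬝ᵥ (!![-(β₂ / (β₁ + β₂)) * α₁,
        ((β₂ / (β₁ + β₂)) * β₁ + β₁ / (β₁ + β₂) * β₂) / 2;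
        ((β₂ / (β₁ + β₂)) * β₁ + β₁ / (β₁ + β₂) * β₂) / 2,
        -(β₁ / (β₁ + β₂) * (α₂ - ξ))] *ᵥ v)
      = -((β₂ * (α₁ * v 0 - β₁ * v 1) ^ 2
      + β₁ * (v 1) ^ 2 * (α₁ * α₂ - (α₁ * ξ + β₁ * β₂))) / (α₁ * (β₁ + β₂))) := by
    simp [dotProduct, mulVec, Fin.sum_univ_two]
    field_simp
    ring
  rw [key]
  exact neg_neg_of_pos (by positivity)
end

section
/- Let h : ℝᵖ → ℝⁿ be ℓ-Lipschitz, let W : ℝⁿ × ℝᵖ → ℝ be continuous with W(x,u) ≥ α‖x − h(u)‖² for some α > 0 and all (x,u) (in particular W ≥ 0), and let V : ℝᵖ → ℝ be continuous with compact sublevel sets. Then the function Z : ℝⁿ × ℝᵖ → ℝ defined by Z(x,u) := V(u) + W(x,u) has compact sublevel sets, i.e. {(x,u) : Z(x,u) ≤ c} is compact for every c ∈ ℝ. -/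
/-- If `V` has compact sublevel sets and `W ≥ α‖x - h(u)‖²` with `h` Lipschitz,
then `Z(x,u) = V(u) + W(x,u)` has compact sublevel sets. -/
theorem stmt13 {n p : ℕ}
    (h : EuclideanSpace ℝ (Fin p) → EuclideanSpace ℝ (Fin n))
    (W : EuclideanSpace ℝ (Fin n) → EuclideanSpace ℝ (Fin p) → ℝ)
    (V : EuclideanSpace ℝ (Fin p) → ℝ)
    (ℓ : NNReal) (α : ℝ) (hα : 0 < α)
    (hh_lip : LipschitzWith ℓ h)
    (hW_cont : Continuous (Function.uncurry W))
    (hW_lb : ∀ x u, α * ‖x - h u‖ ^ 2 ≤ W x u)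
    (hV_cont : Continuous V)
    (hV_level : ∀ c : ℝ, IsCompact {u : EuclideanSpace ℝ (Fin p) | V u ≤ c}) :
    ∀ c : ℝ, IsCompact {q : EuclideanSpace ℝ (Fin n) × EuclideanSpace ℝ (Fin p) |
      V q.2 + W q.1 q.2 ≤ c} := by
  intro c
  have hK := hV_level c
  obtain ⟨m, hm⟩ := (hK.image hV_cont).bddBelow
  obtain ⟨B, hB⟩ := (hK.image hh_lip.continuous).isBounded.exists_norm_le
  have hclosed : IsClosed {q : EuclideanSpace ℝ (Fin n) × EuclideanSpace ℝ (Fin p) |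
      V q.2 + W q.1 q.2 ≤ c} :=
    isClosed_le ((hV_cont.comp continuous_snd).add hW_cont) continuous_const
  refine ((isCompact_closedBall (0 : EuclideanSpace ℝ (Fin n))
    ((c - m) / α + 1 + B)).prod hK).of_isClosed_subset hclosed ?_
  rintro ⟨x, u⟩ hq
  have hq' : V u + W x u ≤ c := hq
  have hlb := hW_lb x u
  have h0 : 0 ≤ α * ‖x - h u‖ ^ 2 := by positivity
  have hu : V u ≤ c := by linarith
  have h1 : m ≤ V u := hm ⟨u, hu, rfl⟩
  have h2 : ‖h u‖ ≤ B := hB _ ⟨u, hu, rfl⟩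
  have h3 : ‖x - h u‖ ^ 2 ≤ (c - m) / α := by
    rw [le_div_iff₀ hα]
    linarith
  have h4 : ‖x - h u‖ ≤ (c - m) / α + 1 := by
    nlinarith [sq_nonneg (‖x - h u‖ - 1), norm_nonneg (x - h u)]
  have h5 : ‖x‖ ≤ ‖x - h u‖ + ‖h u‖ := by
    simpa using norm_add_le (x - h u) (h u)
  refine ⟨?_, hu⟩
  rw [mem_closedBall_zero_iff]
  linarith
end
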